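/- Contraction formula for the kernel-weighted rate function (dimension one): assume d = 1, the Cramér moment assumption 0 ∈ interior(D_L), and let f : [0,1] → ℝ be a Lipschitz function not identically zero. Then for every x ∈ ℝ, I_f(x) = min{ I_D(h) : h ∈ BV([0,1];ℝ), ∫₀¹ f dμ_h = x }; that is, the infimum of I_D over {h ∈ BV[0,1] : ∫₀¹ f dμ_h = x} equals I_f(x) and is attained at some h in this set. -/

import Mathlib

/-!
Write `K` for the cumulant generating function, `D` for its domain, `S(λ) = ∫₀¹ f K'(λ f)` for the
derivative of `E_f`. Only the convex-analytic properties of `K` collected in `IsCumulant` matter.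

*Lower bound* (`dual_le_ID`, `lower_bound`). If `u` is continuous on `[0,1]` with values in the
interior of `D`, Fenchel's inequality on each cell of a uniform partition bounds a Riemann sum of
`∫ u dμ_h - ∫₀¹ K(u)` by `I_D(h)`. For `λ` in the domain of `E_f` take `u = θ λ f` and let `θ ↑ 1`;
convexity of `K` together with `K 0 = 0` gives `E_f(θ λ) ≤ θ E_f(λ)`.

*Attainment*. A path `h` with density `g` and one jump `v` at time `s` satisfies
`I_D(h) ≤ ∫₀¹ I(g) + I_∞(v)` (`construct`). Let `goodSet` be the open interval of those `λ` for
which `λ f` stays in the interior of `D`. The function `S` is continuous and nondecreasing there.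

* If `S(λ) = x` for some `λ`, the density `g = K'(λ f)` is optimal: its cost is
  `λ S(λ) - E_f(λ) = λ x - E_f(λ)` (`exists_of_slopeS_eq`).
* If `S < x` throughout, let `λ` increase to the right end of `goodSet`. The costs
  `I(K'(λ f))` increase pointwise and their integrals are bounded by `λ x - E_f(λ) ≤ I_f(x)`, so the
  densities converge to an integrable `g` (`limit_density`). If the right end is infinite, then
  `S(λ) → x` and `g` is optimal. If it is a finite `λ₀`, then `λ₀ f(s)` lies on the boundary of `D`
  for some `s`, and a jump `(x - lim S) / f(s)` at time `s` has cost `λ₀ (x - lim S)`, which is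
  exactly what is left over in the bound (`exists_of_slopeS_lt`).
* If `S > x` throughout, replace `(f, x)` by `(-f, -x)`.

Finally, if `I_f(x) = ∞`, the lower bound makes every admissible `h` optimal, and one exists because
`f` does not vanish identically.
-/

open Set Filter Topology MeasureTheory
open scoped ENNReal

noncomputable section

/-- The Laplace transform `L(u) = E[exp(u X₁)]` of a real random variable. -/
def lap1 {Ω : Type*} [MeasurableSpace Ω] (P : Measure Ω) (X1 : Ω → ℝ) (u : ℝ) : ℝ≥0∞ :=
  ∫⁻ ω, ENNReal.ofReal (Real.exp (u * X1 ω)) ∂P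

/-- The effective domain `D_L` of the Laplace transform. -/
def lapDom1 {Ω : Type*} [MeasurableSpace Ω] (P : Measure Ω) (X1 : Ω → ℝ) : Set ℝ :=
  {u | lap1 P X1 u ≠ ⊤}

/-- The cumulant generating function `K = log L` (junk value where `L = ∞`). -/
def cgfK1 {Ω : Type*} [MeasurableSpace Ω] (P : Measure Ω) (X1 : Ω → ℝ) (u : ℝ) : ℝ :=
  Real.log (lap1 P X1 u).toReal

/-- The Legendre–Fenchel transform `I(v) = sup_u (u v − K(u))`, with values in `[0,∞]`. -/
def rateI1 {Ω : Type*} [MeasurableSpace Ω] (P : Measure Ω) (X1 : Ω → ℝ) (v : ℝ) : ℝ≥0∞ :=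
  ⨆ u ∈ lapDom1 P X1, ENNReal.ofReal (u * v - cgfK1 P X1 u)

/-- The effective domain of `E_f(λ) = ∫₀¹ K(λ f(t)) dt`. -/
def EfDom1 {Ω : Type*} [MeasurableSpace Ω] (P : Measure Ω) (X1 : Ω → ℝ) (f : ℝ → ℝ) :
    Set ℝ :=
  {l | (∀ᵐ t ∂(MeasureTheory.volume.restrict (Icc (0:ℝ) 1)), lap1 P X1 (l * f t) ≠ ⊤) ∧
    IntegrableOn (fun t => cgfK1 P X1 (l * f t)) (Icc (0:ℝ) 1)}

/-- The rate function `I_f = (E_f)^*`. -/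
def rateIf1 {Ω : Type*} [MeasurableSpace Ω] (P : Measure Ω) (X1 : Ω → ℝ) (f : ℝ → ℝ)
    (x : ℝ) : ℝ≥0∞ :=
  ⨆ l ∈ EfDom1 P X1 f, ENNReal.ofReal (l * x - ∫ t in Icc (0:ℝ) 1, cgfK1 P X1 (l * f t))

/-- `h` is càdlàg on `[0,1]`. -/
def Cadlag01 {E : Type*} [TopologicalSpace E] (h : ℝ → E) : Prop :=
  (∀ t ∈ Ico (0:ℝ) 1, Tendsto h (nhdsWithin t (Ioi t)) (nhds (h t))) ∧
  ∀ t ∈ Ioc (0:ℝ) 1, ∃ L, Tendsto h (nhdsWithin t (Iio t)) (nhds L)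

/-- `BV[0,1]`: càdlàg functions on `[0,1]` of finite total variation. -/
def BVset (E : Type*) [NormedAddCommGroup E] : Set (ℝ → E) :=
  {h | Cadlag01 h ∧ eVariationOn h (Icc (0:ℝ) 1) ≠ ⊤}

/-- `h` with its value at `0` replaced by `0`. -/
def zeroAt0 {E : Type*} [Zero E] (h : ℝ → E) : ℝ → E := fun t => if t = 0 then 0 else h t

/-- The rate function `I_D(h)`. -/
def ID {E : Type*} [NormedAddCommGroup E] [NormedSpace ℝ E] (I : E → ℝ≥0∞) (h : ℝ → E) :
    ℝ≥0∞ :=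
  ⨆ (k : ℕ) (t : Fin (k+1) → ℝ) (_ : StrictMono t) (_ : t 0 = 0) (_ : t (Fin.last k) = 1),
    ∑ i : Fin k, ENNReal.ofReal (t i.succ - t i.castSucc) *
      I ((t i.succ - t i.castSucc)⁻¹ • (zeroAt0 h (t i.succ) - zeroAt0 h (t i.castSucc)))

/-- `∫₀¹ f dμ_h = x`, where `μ_h` is the (unique) signed Borel measure on `[0,1]` with
distribution function `h`; `μ_h` is encoded by a Jordan-type representation
`μ_h = μp − μm` with `μp`, `μm` finite measures supported on `[0,1]`. -/
def StieltjesIntegralEq (f : ℝ → ℝ) (h : ℝ → ℝ) (x : ℝ) : Prop :=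
  ∃ μp μm : Measure ℝ, IsFiniteMeasure μp ∧ IsFiniteMeasure μm ∧
    μp (Icc (0:ℝ) 1)ᶜ = 0 ∧ μm (Icc (0:ℝ) 1)ᶜ = 0 ∧
    (∀ t ∈ Icc (0:ℝ) 1, (μp (Icc 0 t)).toReal - (μm (Icc 0 t)).toReal = h t) ∧
    (∫ t, f t ∂μp) - (∫ t, f t ∂μm) = x

/-! ### Convexity and regularity of the cumulant generating function -/

open ProbabilityTheory in
lemma lap1_toReal {Ω : Type*} [MeasurableSpace Ω] (P : Measure Ω)
    (X1 : Ω → ℝ) (hX1 : Measurable X1) (u : ℝ) : (lap1 P X1 u).toReal = mgf X1 P u := by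
  unfold lap1 mgf
  rw [integral_eq_lintegral_of_nonneg_ae]
  · exact Eventually.of_forall fun ω => (Real.exp_pos _).le
  · exact (by fun_prop : Measurable fun ω => Real.exp (u * X1 ω)).aestronglyMeasurable

open ProbabilityTheory in
lemma lapDom1_eq {Ω : Type*} [MeasurableSpace Ω] (P : Measure Ω)
    (X1 : Ω → ℝ) (hX1 : Measurable X1) : lapDom1 P X1 = integrableExpSet X1 P := by
  ext u
  have hm : Measurable fun ω => Real.exp (u * X1 ω) := by fun_prop
  unfold lapDom1 lap1 integrableExpSet
  rw [mem_ofPred_eq, mem_ofPred_eq, ← lt_top_iff_ne_top,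
    ← hasFiniteIntegral_iff_ofReal (Eventually.of_forall fun ω => (Real.exp_pos _).le)]
  exact ⟨fun h => ⟨hm.aestronglyMeasurable, h⟩, fun h => h.2⟩

/-- The convex-analytic content of the Cramér assumption: `K` is finite on the convex set `D`,
which is a neighbourhood of `0`, vanishes at `0`, and on `interior D` it is `C¹` with derivative
`k` and lies above its tangents (up to and including the finite boundary points of `D`). -/
structure IsCumulant (D : Set ℝ) (K k : ℝ → ℝ) : Prop where
  convex : Convex ℝ D
  zero_mem : (0 : ℝ) ∈ interior D
  map_zero : K 0 = 0
  contK : ContinuousOn K (interior D)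
  contk : ContinuousOn k (interior D)
  grad : ∀ u ∈ interior D, ∀ w ∈ D, K u + k u * (w - u) ≤ K w

open ProbabilityTheory in
/-- The tangent inequality is Jensen's inequality for the exponentially tilted law, obtained by
integrating `exp (w X) ≥ exp ((w - u) k) exp (u X) (1 + (w - u) (X - k))`. -/
lemma isCumulant_cgfK1 {Ω : Type*} [MeasurableSpace Ω] (P : Measure Ω) [IsProbabilityMeasure P]
    (X1 : Ω → ℝ) (hX1 : Measurable X1) (hCramer : (0:ℝ) ∈ interior (lapDom1 P X1)) :
    ∃ k : ℝ → ℝ, IsCumulant (lapDom1 P X1) (cgfK1 P X1) k := by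
  have hK : cgfK1 P X1 = cgf X1 P := by
    ext u
    simp [cgfK1, cgf, lap1_toReal P X1 hX1]
  rw [lapDom1_eq P X1 hX1] at *
  rw [hK]
  refine ⟨deriv (cgf X1 P), convex_integrableExpSet, hCramer, by simp, ?_, ?_, ?_⟩
  · exact analyticOnNhd_cgf.continuousOn
  · exact analyticOnNhd_cgf.deriv.continuousOn
  · intro u hu w hw
    have huD : u ∈ integrableExpSet X1 P := interior_subset hu
    have hu' : Integrable (fun ω => Real.exp (u * X1 ω)) P := huD
    have hw' : Integrable (fun ω => Real.exp (w * X1 ω)) P := hw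
    have hpu : 0 < mgf X1 P u := mgf_pos huD
    have hpw : 0 < mgf X1 P w := mgf_pos hw
    set κ := deriv (cgf X1 P) u with hκ
    have hXi : Integrable (fun ω => X1 ω * Real.exp (u * X1 ω)) P := by
      simpa using integrable_pow_mul_exp_of_mem_interior_integrableExpSet hu 1
    have hκ' : P[fun ω => X1 ω * Real.exp (u * X1 ω)] = κ * mgf X1 P u := by
      rw [hκ, deriv_cgf hu, div_mul_cancel₀ _ hpu.ne']
    have key : Real.exp ((w - u) * κ) * mgf X1 P u ≤ mgf X1 P w := by
      have h1 : ∀ ω, Real.exp ((w - u) * κ) * ((1 - (w - u) * κ) * Real.exp (u * X1 ω)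
          + (w - u) * (X1 ω * Real.exp (u * X1 ω))) ≤ Real.exp (w * X1 ω) := by
        intro ω
        have := Real.add_one_le_exp ((w - u) * (X1 ω - κ))
        have e : Real.exp (w * X1 ω) = Real.exp ((w - u) * κ) * (Real.exp (u * X1 ω) *
            Real.exp ((w - u) * (X1 ω - κ))) := by
          rw [← Real.exp_add, ← Real.exp_add]; congr 1; ring
        rw [e]
        refine mul_le_mul_of_nonneg_left ?_ (Real.exp_pos _).le
        have := mul_le_mul_of_nonneg_left this (Real.exp_pos (u * X1 ω)).le
        linarith
      have h2 := integral_mono (((hu'.const_mul (1 - (w - u) * κ)).add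
        (hXi.const_mul (w - u))).const_mul (Real.exp ((w - u) * κ))) hw' h1
      have h3 : ∫ ω, Real.exp ((w - u) * κ) * ((1 - (w - u) * κ) * Real.exp (u * X1 ω)
          + (w - u) * (X1 ω * Real.exp (u * X1 ω))) ∂P = Real.exp ((w - u) * κ) * mgf X1 P u := by
        rw [integral_const_mul, integral_add (hu'.const_mul _) (hXi.const_mul _),
          integral_const_mul, integral_const_mul, hκ']
        unfold mgf
        ring
      rw [← h3]
      exact h2
    have := Real.log_le_log (by positivity) key
    rw [Real.log_mul (Real.exp_pos _).ne' hpu.ne', Real.log_exp] at this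
    unfold cgf
    linarith

namespace IsCumulant

variable {D : Set ℝ} {K k : ℝ → ℝ}

lemma zero_mem' (H : IsCumulant D K k) : (0 : ℝ) ∈ D := interior_subset H.zero_mem

lemma smul_mem (H : IsCumulant D K k) {u θ : ℝ} (hu : u ∈ closure D) (h0 : 0 ≤ θ) (h1 : θ < 1) :
    θ * u ∈ interior D := by
  have := H.convex.combo_interior_closure_mem_interior H.zero_mem hu
    (a := 1 - θ) (b := θ) (by linarith) h0 (by ring)
  simpa using this

lemma K_smul_le (H : IsCumulant D K k) {u θ : ℝ} (hu : u ∈ D) (h0 : 0 ≤ θ) (h1 : θ < 1) :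
    K (θ * u) ≤ θ * K u := by
  have hi := H.smul_mem (subset_closure hu) h0 h1
  have a1 := H.grad _ hi u hu
  have a2 := H.grad _ hi 0 H.zero_mem'
  rw [H.map_zero] at a2
  nlinarith [mul_le_mul_of_nonneg_left a1 h0, mul_le_mul_of_nonneg_left a2 (sub_nonneg.2 h1.le)]

/-- `I (k u) = u k(u) - K(u)`, in the form of the Fenchel inequality it amounts to. -/
lemma fenchel (H : IsCumulant D K k) {u w : ℝ} (hu : u ∈ interior D) (hw : w ∈ D) :
    w * k u - K w ≤ u * k u - K u := by
  have := H.grad u hu w hw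
  linarith

lemma cost_nonneg (H : IsCumulant D K k) {u : ℝ} (hu : u ∈ interior D) : 0 ≤ u * k u - K u := by
  have := H.fenchel hu H.zero_mem'
  simpa [H.map_zero] using this

lemma k_mono (H : IsCumulant D K k) {u w : ℝ} (hu : u ∈ interior D) (hw : w ∈ interior D) :
    0 ≤ (k w - k u) * (w - u) := by
  have a := H.grad u hu w (interior_subset hw)
  have b := H.grad w hw u (interior_subset hu)
  linarith

lemma k_mono_mul (H : IsCumulant D K k) {l l' a : ℝ}
    (hll : l ≤ l') (h : l * a ∈ interior D) (h' : l' * a ∈ interior D) :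
    0 ≤ (k (l' * a) - k (l * a)) * a := by
  rcases hll.eq_or_lt with rfl | hlt
  · simp
  have a2 := H.k_mono h h'
  have : (k (l' * a) - k (l * a)) * (l' * a - l * a)
    = ((k (l' * a) - k (l * a)) * a) * (l' - l) := by ring
  rw [this] at a2
  exact nonneg_of_mul_nonneg_left a2 (sub_pos.2 hlt)

/-- The cost `λ a k(λ a) - K(λ a)` is nondecreasing in `λ ≥ 0`, for either sign of `a`. -/
lemma cost_mono (H : IsCumulant D K k) {l l' a : ℝ} (hl : 0 ≤ l) (hll : l ≤ l')
    (h : l * a ∈ interior D) (h' : l' * a ∈ interior D) :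
    l * a * k (l * a) - K (l * a) ≤ l' * a * k (l' * a) - K (l' * a) := by
  have a1 := H.fenchel h' (interior_subset h)
  have a3 := H.k_mono_mul hll h h'
  nlinarith [mul_nonneg hl a3]

end IsCumulant

/-! ### Partitions and Riemann sums -/

/-- The cells of a partition of `[0,1]`: `(s, r]`, except that the first cell is closed at `0`,
so that it sees a possible atom of `μ_h` at `0` (this is what replacing `h 0` by `0` amounts to). -/
def cell (s r : ℝ) : Set ℝ := if s = 0 then Icc 0 r else Ioc s r

lemma measurableSet_cell (s r : ℝ) : MeasurableSet (cell s r) := by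
  unfold cell; split_ifs <;> measurability

lemma cell_subset_Icc (s r : ℝ) : cell s r ⊆ Icc s r := by
  unfold cell; split_ifs with h
  · rw [h]
  · exact Ioc_subset_Icc_self

lemma cell_subset {s r : ℝ} (hs : 0 ≤ s) (hr : r ≤ 1) : cell s r ⊆ Icc 0 1 :=
  (cell_subset_Icc s r).trans (Icc_subset_Icc hs hr)

lemma volume_cell {s r : ℝ} (hs : 0 ≤ s) (hr : r ≤ 1) :
    (volume.restrict (Icc (0:ℝ) 1)) (cell s r) = ENNReal.ofReal (r - s) := by
  rw [Measure.restrict_apply (measurableSet_cell s r), inter_eq_left.2 (cell_subset hs hr)]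
  unfold cell; split_ifs with h
  · rw [h, Real.volume_Icc]
  · rw [Real.volume_Ioc]

/-- The increments of `zeroAt0 h` are the `μ_h`-masses of the cells. -/
lemma zeroAt0_sub {h : ℝ → ℝ} {μp μm : Measure ℝ} [IsFiniteMeasure μp] [IsFiniteMeasure μm]
    (hh : ∀ t ∈ Icc (0:ℝ) 1, (μp (Icc 0 t)).toReal - (μm (Icc 0 t)).toReal = h t)
    {s r : ℝ} (hs : 0 ≤ s) (hsr : s < r) (hr : r ≤ 1) :
    zeroAt0 h r - zeroAt0 h s = (μp (cell s r)).toReal - (μm (cell s r)).toReal := by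
  have hr0 : r ≠ 0 := (hs.trans_lt hsr).ne'
  unfold zeroAt0 cell
  rw [if_neg hr0]
  split_ifs with h0
  · rw [sub_zero, ← hh r ⟨hs.trans hsr.le, hr⟩]
  · rw [← hh r ⟨hs.trans hsr.le, hr⟩, ← hh s ⟨hs, hsr.le.trans hr⟩]
    have key : ∀ μ : Measure ℝ, IsFiniteMeasure μ →
        (μ (Ioc s r)).toReal = (μ (Icc 0 r)).toReal - (μ (Icc 0 s)).toReal := by
      intro μ _
      have e : Icc (0:ℝ) r = Icc 0 s ∪ Ioc s r := (Icc_union_Ioc_eq_Icc hs hsr.le).symm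
      have d : Disjoint (Icc (0:ℝ) s) (Ioc s r) :=
        disjoint_left.2 fun x hx hx' => (hx.2.trans_lt hx'.1).false
      rw [e, measure_union d measurableSet_Ioc, ENNReal.toReal_add (measure_ne_top _ _)
        (measure_ne_top _ _)]
      ring
    rw [key μp inferInstance, key μm inferInstance]
    ring

lemma cell_disjoint {n : ℕ} {t : Fin (n+1) → ℝ} (ht : StrictMono t) (h0 : t 0 = 0) :
    Pairwise (Function.onFun Disjoint fun i : Fin n => cell (t i.castSucc) (t i.succ)) := by
  have key : ∀ i j : Fin n, i < j →
      Disjoint (cell (t i.castSucc) (t i.succ)) (cell (t j.castSucc) (t j.succ)) := by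
    intro i j hij
    have h1 : t i.succ ≤ t j.castSucc := ht.monotone (by
      rw [Fin.le_def]; simp only [Fin.val_succ, Fin.val_castSucc]; exact hij)
    have h2 : t 0 < t i.succ := ht (Fin.succ_pos i)
    have h3 : t j.castSucc ≠ 0 := (h0 ▸ h2.trans_le h1).ne'
    refine disjoint_left.2 fun x hx hx' => ?_
    have := (cell_subset_Icc _ _ hx).2
    rw [cell, if_neg h3] at hx'
    linarith [hx'.1]
  intro i j hij
  rcases lt_or_gt_of_ne hij with h | h
  · exact key i j h
  · exact (key j i h).symm

/-- The perspective `(r - s) I(Δ / (r - s))` of the Legendre transform `I`. -/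
lemma perspective (D : Set ℝ) (K : ℝ → ℝ) {s r : ℝ} (hsr : s < r) (Δ : ℝ) :
    ENNReal.ofReal (r - s) * (⨆ u ∈ D, ENNReal.ofReal (u * ((r - s)⁻¹ • Δ) - K u))
      = ⨆ u ∈ D, ENNReal.ofReal (u * Δ - (r - s) * K u) := by
  have h : 0 < r - s := sub_pos.2 hsr
  simp_rw [ENNReal.mul_iSup, ← ENNReal.ofReal_mul h.le]
  congr! 4 with u hu
  rw [smul_eq_mul]
  field_simp

lemma partition_mem {n : ℕ} {t : Fin (n+1) → ℝ} (ht : StrictMono t) (h0 : t 0 = 0)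
    (h1 : t (Fin.last n) = 1) (i : Fin (n+1)) : t i ∈ Icc (0:ℝ) 1 :=
  ⟨h0 ▸ ht.monotone (Fin.zero_le i), h1 ▸ ht.monotone (Fin.le_last i)⟩

lemma partition_lt {n : ℕ} {t : Fin (n+1) → ℝ} (ht : StrictMono t) (i : Fin n) :
    t i.castSucc < t i.succ := ht Fin.castSucc_lt_succ

/-- A measure dominating the cost on every cell dominates `I_D`, the cells being disjoint. -/
lemma ID_le_measure {D : Set ℝ} {K : ℝ → ℝ} {h : ℝ → ℝ} (ρ : Measure ℝ)
    (hρ : ∀ s r, 0 ≤ s → s < r → r ≤ 1 → ∀ u ∈ D,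
      ENNReal.ofReal (u * (zeroAt0 h r - zeroAt0 h s) - (r - s) * K u) ≤ ρ (cell s r)) :
    ID (fun v => ⨆ u ∈ D, ENNReal.ofReal (u * v - K u)) h ≤ ρ univ := by
  unfold ID
  refine iSup_le fun n => iSup_le fun t => iSup_le fun ht => iSup_le fun h0 => iSup_le fun h1 => ?_
  calc _ ≤ ∑ i : Fin n, ρ (cell (t i.castSucc) (t i.succ)) := by
        refine Finset.sum_le_sum fun i _ => ?_
        rw [perspective D K (partition_lt ht i)]
        exact iSup₂_le fun u hu => hρ _ _ (partition_mem ht h0 h1 _).1 (partition_lt ht i)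
          (partition_mem ht h0 h1 _).2 u hu
    _ ≤ ρ univ := sum_measure_le_measure_univ
        (fun i _ => (measurableSet_cell _ _).nullMeasurableSet)
        (fun i _ j _ hij => (cell_disjoint ht h0 hij).aedisjoint)

lemma integrable_of_continuousOn {ν : Measure ℝ} [IsFiniteMeasure ν]
    (hν : ν (Icc (0:ℝ) 1)ᶜ = 0) {w : ℝ → ℝ} (hw : ContinuousOn w (Icc 0 1)) :
    Integrable w ν := by
  have := hw.integrableOn_compact (μ := ν) isCompact_Icc
  rwa [IntegrableOn, Measure.restrict_eq_self_of_ae_mem] at this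
  exact measure_eq_zero_iff_ae_notMem.1 hν |>.mono fun x hx => by simpa using hx

/-- The uniform partition of `[0,1]` into `n` intervals. -/
def unif (n : ℕ) (i : Fin (n+1)) : ℝ := (i : ℕ) / (n : ℝ)

lemma unif_strictMono {n : ℕ} (hn : 0 < n) : StrictMono (unif n) := by
  intro i j hij
  unfold unif
  have : (0:ℝ) < n := by exact_mod_cast hn
  have : ((i : ℕ) : ℝ) < (j : ℕ) := by exact_mod_cast hij
  gcongr

lemma unif_zero (n : ℕ) : unif n 0 = 0 := by simp [unif]

lemma unif_last {n : ℕ} (hn : 0 < n) : unif n (Fin.last n) = 1 := by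
  have : (n:ℝ) ≠ 0 := by exact_mod_cast hn.ne'
  simp [unif, this]

lemma unif_succ (n : ℕ) (i : Fin n) : unif n i.succ - unif n i.castSucc = 1 / n := by
  simp [unif]; ring

lemma iUnion_unif {n : ℕ} (hn : 0 < n) :
    (⋃ i : Fin n, cell (unif n i.castSucc) (unif n i.succ)) = Icc 0 1 := by
  have hn' : (0:ℝ) < n := by exact_mod_cast hn
  apply subset_antisymm
  · exact iUnion_subset fun i => cell_subset
      (partition_mem (unif_strictMono hn) (unif_zero n) (unif_last hn) _).1
      (partition_mem (unif_strictMono hn) (unif_zero n) (unif_last hn) _).2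
  · intro x hx
    rcases hx.1.eq_or_lt with h | h
    · subst h
      refine mem_iUnion.2 ⟨⟨0, hn⟩, ?_⟩
      have : (Fin.castSucc ⟨0, hn⟩ : Fin (n+1)) = 0 := rfl
      rw [this, unif_zero, cell, if_pos rfl]
      exact ⟨le_rfl, (partition_mem (unif_strictMono hn) (unif_zero n) (unif_last hn) _).1⟩
    · have h1 : 0 < ⌈(n:ℝ) * x⌉₊ := Nat.ceil_pos.2 (by positivity)
      have h2 : ⌈(n:ℝ) * x⌉₊ ≤ n := Nat.ceil_le.2 (by nlinarith [hx.2])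
      refine mem_iUnion.2 ⟨⟨⌈(n:ℝ) * x⌉₊ - 1, by omega⟩, ?_⟩
      have h3 : ((⌈(n:ℝ) * x⌉₊ - 1 : ℕ) : ℝ) = (⌈(n:ℝ) * x⌉₊ : ℝ) - 1 := by
        rw [Nat.cast_sub h1]; simp
      have h4 : (n:ℝ) * x ≤ ⌈(n:ℝ) * x⌉₊ := Nat.le_ceil _
      have h5 : (⌈(n:ℝ) * x⌉₊ : ℝ) < n * x + 1 := Nat.ceil_lt_add_one (by positivity)
      unfold cell unif
      simp only [Fin.val_castSucc, Fin.val_succ, Nat.cast_add, h3, Nat.cast_one, sub_add_cancel]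
      split_ifs
      · exact ⟨hx.1, by rw [le_div_iff₀ hn']; linarith⟩
      · exact ⟨by rw [div_lt_iff₀ hn']; linarith, by rw [le_div_iff₀ hn']; linarith⟩

/-- Convergence of Riemann sums (tagged at right end points) against a finite measure. -/
lemma riemann_tendsto {ν : Measure ℝ} [IsFiniteMeasure ν]
    (hν : ν (Icc (0:ℝ) 1)ᶜ = 0) {w : ℝ → ℝ} (hw : ContinuousOn w (Icc 0 1)) :
    Tendsto (fun n : ℕ => ∑ i : Fin n, w (unif n i.succ) *
      (ν (cell (unif n i.castSucc) (unif n i.succ))).toReal) atTop (𝓝 (∫ t, w t ∂ν)) := by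
  have hint := integrable_of_continuousOn hν hw
  have huc := isCompact_Icc.uniformContinuousOn_of_continuous hw
  rw [Metric.uniformContinuousOn_iff_le] at huc
  rw [Metric.tendsto_atTop]
  intro ε hε
  obtain ⟨δ, hδ, hwδ⟩ := huc (ε / ((ν univ).toReal + 1)) (by positivity)
  obtain ⟨N, hN⟩ := exists_nat_gt (1 / δ)
  refine ⟨N + 1, fun n hn => ?_⟩
  have hn0 : 0 < n := by omega
  have hn' : (0:ℝ) < n := by exact_mod_cast hn0
  have hsmall : 1 / (n:ℝ) ≤ δ := by
    rw [div_le_iff₀ hn']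
    have : (N:ℝ) ≤ n := by exact_mod_cast (by omega : N ≤ n)
    rw [div_lt_iff₀ hδ] at hN
    nlinarith
  have hmem := partition_mem (unif_strictMono hn0) (unif_zero n) (unif_last hn0)
  set A : Fin n → Set ℝ := fun i => cell (unif n i.castSucc) (unif n i.succ) with hA
  have hdisj : Pairwise (Function.onFun Disjoint A) :=
    cell_disjoint (unif_strictMono hn0) (unif_zero n)
  have e1 : ∫ t, w t ∂ν = ∑ i : Fin n, ∫ t in A i, w t ∂ν := by
    rw [← integral_iUnion_fintype (fun i => measurableSet_cell _ _) hdisj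
      (fun i => hint.integrableOn), iUnion_unif hn0, Measure.restrict_eq_self_of_ae_mem]
    exact measure_eq_zero_iff_ae_notMem.1 hν |>.mono fun x hx => by simpa using hx
  rw [Real.dist_eq, e1, ← Finset.sum_sub_distrib]
  have e2 : ∀ i : Fin n, |w (unif n i.succ) * (ν (A i)).toReal - ∫ t in A i, w t ∂ν|
      ≤ ε / ((ν univ).toReal + 1) * (ν (A i)).toReal := by
    intro i
    have : w (unif n i.succ) * (ν (A i)).toReal - ∫ t in A i, w t ∂ν
        = ∫ t in A i, (w (unif n i.succ) - w t) ∂ν := by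
      rw [integral_sub (integrable_const _) hint.integrableOn]
      simp [Measure.real, mul_comm]
    rw [this, ← Real.norm_eq_abs]
    refine norm_setIntegral_le_of_norm_le_const (measure_lt_top _ _) fun x hx => ?_
    have hx' := cell_subset_Icc _ _ hx
    have hs := unif_succ n i
    refine hwδ _ (hmem _) _ ⟨(hmem _).1.trans hx'.1, hx'.2.trans (hmem _).2⟩ ?_
    rw [Real.dist_eq, abs_le]
    constructor <;> linarith [hx'.1, hx'.2]
  calc _ ≤ ∑ i : Fin n, |w (unif n i.succ) * (ν (A i)).toReal - ∫ t in A i, w t ∂ν| :=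
        Finset.abs_sum_le_sum_abs _ _
    _ ≤ ∑ i : Fin n, ε / ((ν univ).toReal + 1) * (ν (A i)).toReal :=
        Finset.sum_le_sum fun i _ => e2 i
    _ = ε / ((ν univ).toReal + 1) * ∑ i : Fin n, (ν (A i)).toReal := by rw [Finset.mul_sum]
    _ ≤ ε / ((ν univ).toReal + 1) * (ν univ).toReal := by
        gcongr
        rw [← ENNReal.toReal_sum fun i _ => measure_ne_top _ _]
        exact ENNReal.toReal_mono (measure_ne_top _ _) (sum_measure_le_measure_univ
          (fun i _ => (measurableSet_cell _ _).nullMeasurableSet)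
          (fun i _ j _ hij => (hdisj hij).aedisjoint))
    _ < ε := by
        rw [div_mul_eq_mul_div, div_lt_iff₀ (by positivity)]
        nlinarith

/-! ### Duality lower bound -/

lemma ofReal_sum_le {ι : Type*} (s : Finset ι) (a : ι → ℝ) :
    ENNReal.ofReal (∑ i ∈ s, a i) ≤ ∑ i ∈ s, ENNReal.ofReal (a i) :=
  Finset.le_sum_of_subadditive ENNReal.ofReal ENNReal.ofReal_zero.le
    (fun _ _ => ENNReal.ofReal_add_le) s a

/-- Duality bound `∫ u dμ_h - ∫₀¹ K(u) ≤ I_D(h)` for continuous test functions `u` with values in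
the interior of `D`: on uniform partitions it is Fenchel's inequality on each cell. -/
lemma dual_le_ID {D : Set ℝ} {K k : ℝ → ℝ} (H : IsCumulant D K k) {h : ℝ → ℝ}
    {μp μm : Measure ℝ} [IsFiniteMeasure μp] [IsFiniteMeasure μm]
    (hp : μp (Icc (0:ℝ) 1)ᶜ = 0) (hm : μm (Icc (0:ℝ) 1)ᶜ = 0)
    (hh : ∀ t ∈ Icc (0:ℝ) 1, (μp (Icc 0 t)).toReal - (μm (Icc 0 t)).toReal = h t)
    {u : ℝ → ℝ} (hu : ContinuousOn u (Icc 0 1)) (huD : MapsTo u (Icc 0 1) (interior D)) :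
    ENNReal.ofReal ((∫ t, u t ∂μp) - (∫ t, u t ∂μm) - ∫ t in Icc (0:ℝ) 1, K (u t)) ≤
      ID (fun v => ⨆ u ∈ D, ENNReal.ofReal (u * v - K u)) h := by
  have hKu : ContinuousOn (fun t => K (u t)) (Icc 0 1) := H.contK.comp hu huD
  have hv : (volume.restrict (Icc (0:ℝ) 1)) (Icc (0:ℝ) 1)ᶜ = 0 := by
    rw [Measure.restrict_apply measurableSet_Icc.compl]; simp
  have T := ((riemann_tendsto hp hu).sub (riemann_tendsto hm hu)).sub (riemann_tendsto hv hKu)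
  refine le_of_tendsto (ENNReal.tendsto_ofReal T) ?_
  filter_upwards [eventually_gt_atTop 0] with n hn
  have hmem := partition_mem (unif_strictMono hn) (unif_zero n) (unif_last hn)
  rw [← Finset.sum_sub_distrib, ← Finset.sum_sub_distrib]
  refine (ofReal_sum_le _ _).trans ?_
  unfold ID
  refine le_trans ?_ (le_iSup_of_le n <| le_iSup_of_le (unif n) <|
    le_iSup_of_le (unif_strictMono hn) <| le_iSup_of_le (unif_zero n) <|
    le_iSup_of_le (unif_last hn) le_rfl)
  refine Finset.sum_le_sum fun i _ => ?_
  have hlt := partition_lt (unif_strictMono hn) i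
  rw [perspective D K hlt]
  refine le_iSup₂_of_le (u (unif n i.succ)) (interior_subset (huD (hmem _))) ?_
  rw [zeroAt0_sub hh (hmem _).1 hlt (hmem _).2, volume_cell (hmem _).1 (hmem _).2,
    ENNReal.toReal_ofReal (sub_pos.2 hlt).le]
  apply le_of_eq
  congr 1
  ring

/-- Every `λ` in the domain of `E_f` gives a lower bound for `I_D`: `θ λ f` takes values in the
interior of `D` for `θ < 1`, and convexity of `K` allows `θ → 1`. -/
lemma lower_bound {D : Set ℝ} {K k : ℝ → ℝ} (H : IsCumulant D K k) {f h : ℝ → ℝ} {x : ℝ}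
    (hf : ContinuousOn f (Icc 0 1)) (hx : StieltjesIntegralEq f h x) {l : ℝ}
    (hl : ∀ᵐ t ∂(volume.restrict (Icc (0:ℝ) 1)), l * f t ∈ D)
    (hint : IntegrableOn (fun t => K (l * f t)) (Icc (0:ℝ) 1)) :
    ENNReal.ofReal (l * x - ∫ t in Icc (0:ℝ) 1, K (l * f t)) ≤
      ID (fun v => ⨆ u ∈ D, ENNReal.ofReal (u * v - K u)) h := by
  obtain ⟨μp, μm, _, _, hp, hm, hh, hxx⟩ := hx
  have hlf : ContinuousOn (fun t => l * f t) (Icc 0 1) := continuousOn_const.mul hf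
  have hcl : ∀ t ∈ Icc (0:ℝ) 1, l * f t ∈ closure D := by
    intro t ht
    by_contra hcon
    -- A relatively open set of times is nonempty, hence of positive measure.
    have hden : t ∈ closure (Ioo (0:ℝ) 1) := by rwa [closure_Ioo zero_ne_one]
    have hev : ∀ᶠ s in 𝓝[Icc 0 1] t, l * f s ∈ (closure D)ᶜ :=
      (hlf t ht).eventually (isClosed_closure.isOpen_compl.mem_nhds hcon)
    obtain ⟨U, hUo, htU, hU⟩ := mem_nhdsWithin.1 hev
    have hne : (U ∩ Ioo 0 1).Nonempty := mem_closure_iff.1 hden U hUo htU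
    have hpos : 0 < volume (U ∩ Ioo (0:ℝ) 1) := (hUo.inter isOpen_Ioo).measure_pos _ hne
    have hz : volume (U ∩ Ioo (0:ℝ) 1) = 0 := by
      rw [ae_restrict_iff' measurableSet_Icc] at hl
      refine measure_mono_null ?_ (ae_iff.1 hl)
      intro s hs hs'
      exact hU ⟨hs.1, Ioo_subset_Icc_self hs.2⟩ (subset_closure (hs' (Ioo_subset_Icc_self hs.2)))
    exact hpos.ne' hz
  have key : ∀ θ ∈ Ioo (0:ℝ) 1, ENNReal.ofReal (θ * (l * x - ∫ t in Icc (0:ℝ) 1, K (l * f t)))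
      ≤ ID (fun v => ⨆ u ∈ D, ENNReal.ofReal (u * v - K u)) h := by
    intro θ hθ
    have hu : ContinuousOn (fun t => θ * (l * f t)) (Icc 0 1) := continuousOn_const.mul hlf
    have huD : MapsTo (fun t => θ * (l * f t)) (Icc 0 1) (interior D) :=
      fun t ht => H.smul_mem (hcl t ht) hθ.1.le hθ.2
    refine le_trans (ENNReal.ofReal_le_ofReal ?_) (dual_le_ID H hp hm hh hu huD)
    have e : ∫ t in Icc (0:ℝ) 1, K (θ * (l * f t)) ≤ θ * ∫ t in Icc (0:ℝ) 1, K (l * f t) := by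
      rw [← integral_const_mul]
      refine integral_mono_ae ((H.contK.comp hu huD).integrableOn_compact isCompact_Icc)
        (hint.const_mul θ) ?_
      filter_upwards [hl] with t ht
      exact H.K_smul_le ht hθ.1.le hθ.2
    simp_rw [integral_const_mul]
    rw [← hxx]
    linarith
  have T : Tendsto (fun θ : ℝ => ENNReal.ofReal
      (θ * (l * x - ∫ t in Icc (0:ℝ) 1, K (l * f t)))) (𝓝[<] 1)
      (𝓝 (ENNReal.ofReal (1 * (l * x - ∫ t in Icc (0:ℝ) 1, K (l * f t))))) := by
    refine ENNReal.tendsto_ofReal (Tendsto.mono_left ?_ nhdsWithin_le_nhds)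
    exact (continuous_id.mul continuous_const).tendsto 1
  rw [one_mul] at T
  refine le_of_tendsto T ?_
  filter_upwards [Ioo_mem_nhdsLT (zero_lt_one' ℝ)] with θ hθ using key θ hθ

/-! ### Paths with a density and one jump -/

lemma cadlag_bv_of_measures {μp μm : Measure ℝ} [IsFiniteMeasure μp] [IsFiniteMeasure μm] :
    (fun t => (μp (Icc 0 t)).toReal - (μm (Icc 0 t)).toReal) ∈ BVset ℝ := by
  have mono : ∀ μ : Measure ℝ, IsFiniteMeasure μ → Monotone fun t => (μ (Icc 0 t)).toReal :=
    fun μ _ s t hst => ENNReal.toReal_mono (measure_ne_top _ _)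
      (measure_mono (Icc_subset_Icc_right hst))
  have rc : ∀ μ : Measure ℝ, IsFiniteMeasure μ → ∀ t,
      Tendsto (fun t => (μ (Icc 0 t)).toReal) (𝓝[>] t) (𝓝 (μ (Icc 0 t)).toReal) := by
    intro μ _ t
    refine (ENNReal.tendsto_toReal (measure_ne_top _ _)).comp ?_
    have e : Icc (0:ℝ) t = ⋂ r > t, Icc 0 r := by
      ext y
      simp only [mem_Icc, mem_iInter]
      exact ⟨fun h r hr => ⟨h.1, h.2.trans hr.le⟩, fun h =>
        ⟨(h (t+1) (by simp)).1, le_of_forall_gt_imp_ge_of_dense fun r hr => (h r hr).2⟩⟩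
    rw [e]
    exact tendsto_measure_biInter_gt (fun r _ => measurableSet_Icc.nullMeasurableSet)
      (fun i j _ hij => Icc_subset_Icc_right hij) ⟨t + 1, by simp, measure_ne_top _ _⟩
  refine ⟨⟨fun t _ => (rc μp inferInstance t).sub (rc μm inferInstance t), fun t _ => ⟨_,
    ((mono μp inferInstance).tendsto_leftLim t).sub
      ((mono μm inferInstance).tendsto_leftLim t)⟩⟩, ?_⟩
  have bv : ∀ μ : Measure ℝ, IsFiniteMeasure μ →
      eVariationOn (fun t => (μ (Icc 0 t)).toReal) (Icc 0 1) ≠ ⊤ := by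
    intro μ _
    refine ((mono μ inferInstance).monotoneOn _).boundedVariationOn (C := (μ univ).toReal)
      fun t _ => ?_
    rw [abs_of_nonneg ENNReal.toReal_nonneg]
    exact ENNReal.toReal_mono (measure_ne_top _ _) (measure_mono (subset_univ _))
  refine ne_top_of_le_ne_top (ENNReal.add_ne_top.2 ⟨bv μp inferInstance, bv μm inferInstance⟩) ?_
  refine iSup_le fun p => ?_
  refine le_trans ?_ (add_le_add (eVariationOn.sum_le (n := p.1) p.2.2.1 p.2.2.2)
    (eVariationOn.sum_le (n := p.1) p.2.2.1 p.2.2.2))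
  rw [← Finset.sum_add_distrib]
  refine Finset.sum_le_sum fun i _ => ?_
  simp only [edist_dist, ← ENNReal.ofReal_add dist_nonneg dist_nonneg]
  exact ENNReal.ofReal_le_ofReal (dist_sub_sub_le _ _ _ _)

/-- The absolutely continuous part with density `g`, plus an atom of mass `v` at `s`, as the
positive part of a Jordan-type decomposition; the negative part is `partMeas (-g) (-v) s`. -/
def partMeas (g : ℝ → ℝ) (v s : ℝ) : Measure ℝ :=
  (volume.restrict (Icc (0:ℝ) 1)).withDensity (fun t => ENNReal.ofReal (g t)) +
    ENNReal.ofReal v • Measure.dirac s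

lemma partMeas_finite {g : ℝ → ℝ} (hg : IntegrableOn g (Icc 0 1)) (v s : ℝ) :
    IsFiniteMeasure (partMeas g v s) := by
  have := isFiniteMeasure_withDensity_ofReal (μ := volume.restrict (Icc (0:ℝ) 1)) hg.2
  have : IsFiniteMeasure (ENNReal.ofReal v • Measure.dirac s) :=
    Measure.smul_finite _ ENNReal.ofReal_ne_top
  unfold partMeas
  infer_instance

lemma partMeas_compl (g : ℝ → ℝ) (v : ℝ) {s : ℝ} (hs : s ∈ Icc (0:ℝ) 1) :
    partMeas g v s (Icc (0:ℝ) 1)ᶜ = 0 := by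
  have h1 : (volume.restrict (Icc (0:ℝ) 1)) (Icc (0:ℝ) 1)ᶜ = 0 := by
    rw [Measure.restrict_apply measurableSet_Icc.compl]; simp
  have h2 := withDensity_absolutelyContinuous (volume.restrict (Icc (0:ℝ) 1))
    (fun t => ENNReal.ofReal (g t)) h1
  rw [partMeas, Measure.add_apply, h2, Measure.smul_apply,
    Measure.dirac_apply' _ measurableSet_Icc.compl, indicator_of_notMem (by simpa using hs)]
  simp

lemma partMeas_sub {g : ℝ → ℝ} (hg : IntegrableOn g (Icc 0 1)) (v s : ℝ) {A : Set ℝ}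
    (hA : MeasurableSet A) (hA1 : A ⊆ Icc 0 1) :
    (partMeas g v s A).toReal - (partMeas (-g) (-v) s A).toReal
      = (∫ t in A, g t) + A.indicator (fun _ => v) s := by
  have hgA : IntegrableOn g A := hg.mono_set hA1
  have e0 : ∀ g' : ℝ → ℝ, (volume.restrict (Icc (0:ℝ) 1)).withDensity
      (fun t => ENNReal.ofReal (g' t)) A = ∫⁻ t in A, ENNReal.ofReal (g' t) := by
    intro g'
    rw [withDensity_apply _ hA, Measure.restrict_restrict hA, inter_eq_left.2 hA1]
  have fin : ∀ g' : ℝ → ℝ, IntegrableOn g' A → ∫⁻ t in A, ENNReal.ofReal (g' t) ≠ ⊤ := by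
    intro g' hg'
    exact ((lintegral_mono fun t => (Real.ofReal_le_enorm (g' t))).trans_lt hg'.2).ne
  have fin2 : ∀ v' : ℝ, (ENNReal.ofReal v' • Measure.dirac s) A ≠ ⊤ := by
    intro v'
    rw [Measure.smul_apply, smul_eq_mul]
    exact ENNReal.mul_ne_top ENNReal.ofReal_ne_top (measure_ne_top _ _)
  have hgm : IntegrableOn (-g) A := hgA.neg
  rw [partMeas, partMeas, Measure.add_apply, Measure.add_apply, e0, e0,
    ENNReal.toReal_add (fin _ hgA) (fin2 _), ENNReal.toReal_add (fin _ hgm) (fin2 _),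
    integral_eq_lintegral_pos_part_sub_lintegral_neg_part hgA, Measure.smul_apply,
    Measure.smul_apply, Measure.dirac_apply' _ hA]
  have e3 : ((ENNReal.ofReal v • A.indicator (1 : ℝ → ℝ≥0∞) s).toReal)
      - ((ENNReal.ofReal (-v) • A.indicator (1 : ℝ → ℝ≥0∞) s).toReal)
      = A.indicator (fun _ => v) s := by
    by_cases hs : s ∈ A
    · simp only [indicator_of_mem hs, Pi.one_apply, smul_eq_mul, mul_one,
        ENNReal.toReal_ofReal']
      rcases le_total 0 v with h | h
      · rw [max_eq_left h, max_eq_right (by linarith)]; ring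
      · rw [max_eq_right h, max_eq_left (by linarith)]; ring
    · simp [indicator_of_notMem hs]
  rw [← e3]
  simp only [Pi.neg_apply]
  ring

lemma integral_partMeas {f g : ℝ → ℝ} (hf : ContinuousOn f (Icc 0 1))
    (hg : IntegrableOn g (Icc 0 1)) (v : ℝ) {s : ℝ} (hs : s ∈ Icc (0:ℝ) 1) :
    ∫ t, f t ∂(partMeas g v s) = (∫ t in Icc (0:ℝ) 1, max (g t) 0 * f t) + max v 0 * f s := by
  have := partMeas_finite hg v s
  have hint := integrable_of_continuousOn (partMeas_compl g v hs) hf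
  rw [partMeas, integral_add_measure (hint.mono_measure (Measure.le_add_right le_rfl))
    (hint.mono_measure (Measure.le_add_left le_rfl)), integral_smul_measure, integral_dirac,
    integral_withDensity_eq_integral_toReal_smul₀
      hg.aestronglyMeasurable.aemeasurable.ennreal_ofReal
      (Eventually.of_forall fun _ => ENNReal.ofReal_lt_top)]
  simp only [ENNReal.toReal_ofReal', smul_eq_mul]

/-- Sufficient condition for a candidate path: density `g` with `I(g) ≤ G` almost everywhere, and a
jump `v` at time `s` of asymptotic cost `sup_{u ∈ D} u v ≤ c`. -/
lemma construct {D : Set ℝ} {K : ℝ → ℝ} {f g : ℝ → ℝ} {G : ℝ → ℝ≥0∞} {v c s : ℝ}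
    (hf : ContinuousOn f (Icc 0 1)) (hg : IntegrableOn g (Icc 0 1)) (hs : s ∈ Icc (0:ℝ) 1)
    (hv : ∀ u ∈ D, u * v ≤ c)
    (hG : ∀ u ∈ D, ∀ᵐ t ∂(volume.restrict (Icc (0:ℝ) 1)), ENNReal.ofReal (u * g t - K u) ≤ G t) :
    ∃ h ∈ BVset ℝ, StieltjesIntegralEq f h ((∫ t in Icc (0:ℝ) 1, g t * f t) + v * f s) ∧
      ID (fun v => ⨆ u ∈ D, ENNReal.ofReal (u * v - K u)) h
        ≤ (∫⁻ t in Icc (0:ℝ) 1, G t) + ENNReal.ofReal c := by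
  have hgn : IntegrableOn (-g) (Icc 0 1) := hg.neg
  have i1 := partMeas_finite hg v s
  have i2 := partMeas_finite hgn (-v) s
  have hhh : ∀ t ∈ Icc (0:ℝ) 1, (partMeas g v s (Icc 0 t)).toReal -
      (partMeas (-g) (-v) s (Icc 0 t)).toReal = (fun t => (partMeas g v s (Icc 0 t)).toReal -
      (partMeas (-g) (-v) s (Icc 0 t)).toReal) t := fun _ _ => rfl
  refine ⟨_, cadlag_bv_of_measures (μp := partMeas g v s) (μm := partMeas (-g) (-v) s), ?_, ?_⟩
  · refine ⟨_, _, i1, i2, partMeas_compl _ _ hs, partMeas_compl _ _ hs, hhh, ?_⟩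
    rw [integral_partMeas hf hg v hs, integral_partMeas hf hgn (-v) hs]
    have a1 : IntegrableOn (fun t => max (g t) 0 * f t) (Icc 0 1) :=
      IntegrableOn.mul_continuousOn (Integrable.pos_part hg) hf isCompact_Icc
    have a2 : IntegrableOn (fun t => max ((-g) t) 0 * f t) (Icc 0 1) :=
      IntegrableOn.mul_continuousOn (Integrable.pos_part hgn) hf isCompact_Icc
    have e : ∀ y : ℝ, max y 0 - max (-y) 0 = y := by
      intro y
      rcases le_total 0 y with h | h
      · rw [max_eq_left h, max_eq_right (by linarith)]; ring
      · rw [max_eq_right h, max_eq_left (by linarith)]; ring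
    have : ∫ t in Icc (0:ℝ) 1, g t * f t = (∫ t in Icc (0:ℝ) 1, max (g t) 0 * f t)
        - ∫ t in Icc (0:ℝ) 1, max ((-g) t) 0 * f t := by
      rw [← integral_sub a1 a2]
      congr 1 with t
      rw [← sub_mul, Pi.neg_apply, e]
    rw [this]
    have e' := e v
    linear_combination (-f s) * (-e')
  · set ρ : Measure ℝ := (volume.restrict (Icc (0:ℝ) 1)).withDensity G +
      ENNReal.ofReal c • Measure.dirac s with hρ
    have hρu : ρ univ = (∫⁻ t in Icc (0:ℝ) 1, G t) + ENNReal.ofReal c := by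
      rw [hρ, Measure.add_apply, withDensity_apply _ MeasurableSet.univ, Measure.restrict_univ]
      simp
    rw [← hρu]
    refine ID_le_measure ρ fun a b ha hab hb u hu => ?_
    rw [zeroAt0_sub hhh ha hab hb]
    have hA := measurableSet_cell a b
    have hA1 := cell_subset ha hb
    rw [partMeas_sub hg v s hA hA1]
    have hgA : IntegrableOn g (cell a b) := hg.mono_set hA1
    have hvol : volume (cell a b) = ENNReal.ofReal (b - a) := by
      rw [← volume_cell ha hb, Measure.restrict_apply hA, inter_eq_left.2 hA1]
    have e1 : u * ((∫ t in cell a b, g t) + (cell a b).indicator (fun _ => v) s) - (b - a) * K u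
        = (∫ t in cell a b, (u * g t - K u)) + (cell a b).indicator (fun _ => u * v) s := by
      rw [integral_sub (hgA.const_mul u) (integrableOn_const (by rw [hvol]; simp)),
        integral_const_mul, setIntegral_const, Measure.real, hvol,
        ENNReal.toReal_ofReal (sub_pos.2 hab).le]
      by_cases hsA : s ∈ cell a b
      · simp only [indicator_of_mem hsA, smul_eq_mul]; ring
      · simp only [indicator_of_notMem hsA, smul_eq_mul]; ring
    rw [e1]
    refine ENNReal.ofReal_add_le.trans ?_
    rw [hρ, Measure.add_apply, Measure.smul_apply, Measure.dirac_apply' _ hA,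
      withDensity_apply _ hA, Measure.restrict_restrict hA, inter_eq_left.2 hA1]
    refine add_le_add ?_ ?_
    · calc ENNReal.ofReal (∫ t in cell a b, (u * g t - K u))
          ≤ ∫⁻ t in cell a b, ENNReal.ofReal (u * g t - K u) := by
            by_cases hi : IntegrableOn (fun t => u * g t - K u) (cell a b)
            · refine ENNReal.ofReal_le_of_le_toReal ?_
              rw [integral_eq_lintegral_pos_part_sub_lintegral_neg_part hi]
              exact sub_le_self _ ENNReal.toReal_nonneg
            · rw [integral_undef hi]; simp
        _ ≤ ∫⁻ t in cell a b, G t :=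
            lintegral_mono_ae (ae_restrict_of_ae_restrict_of_subset hA1 (hG u hu))
    · by_cases hsA : s ∈ cell a b
      · simp only [indicator_of_mem hsA, smul_eq_mul, Pi.one_apply, mul_one]
        exact ENNReal.ofReal_le_ofReal (hv u hu)
      · simp [indicator_of_notMem hsA]

/-! ### Slopes, costs and limits of the optimal densities -/

/-- The set of `λ` for which `λ f` stays in the interior of `D` on `[0,1]`. For continuous `f` it is
open and contained in the domain of `E_f`. -/
def goodSet (D : Set ℝ) (f : ℝ → ℝ) : Set ℝ := {l | ∀ t ∈ Icc (0:ℝ) 1, l * f t ∈ interior D}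

/-- `S(λ) = ∫₀¹ f K'(λ f)`, the derivative of `E_f`. -/
def slopeS (k f : ℝ → ℝ) (l : ℝ) : ℝ := ∫ t in Icc (0:ℝ) 1, k (l * f t) * f t

/-- `E_f(λ) = ∫₀¹ K(λ f)`. -/
def energyE (K f : ℝ → ℝ) (l : ℝ) : ℝ := ∫ t in Icc (0:ℝ) 1, K (l * f t)

section Good

variable {D : Set ℝ} {K k f : ℝ → ℝ}

lemma zero_mem_goodSet (H : IsCumulant D K k) : (0:ℝ) ∈ goodSet D f := fun t _ => by
  rw [zero_mul]; exact H.zero_mem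

lemma convex_goodSet (H : IsCumulant D K k) : Convex ℝ (goodSet D f) := by
  intro a ha b hb p q hp hq hpq t ht
  have := H.convex.interior (ha t ht) (hb t ht) hp hq hpq
  simp only [smul_eq_mul] at this ⊢
  convert this using 1
  ring

lemma isOpen_goodSet (hf : ContinuousOn f (Icc 0 1)) : IsOpen (goodSet D f) := by
  rw [isOpen_iff_eventually]
  intro l hl
  have hc : Continuous fun z : ℝ × Icc (0:ℝ) 1 => z.1 * f z.2 :=
    continuous_fst.mul (hf.domRestrict.comp continuous_snd)
  have := (isCompact_univ (X := Icc (0:ℝ) 1)).eventually_forall_of_forall_eventually (x₀ := l)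
    (P := fun l t => l * f t ∈ interior D) fun t _ =>
      hc.continuousAt.eventually (isOpen_interior.mem_nhds (hl t t.2))
  filter_upwards [this] with l' hl' t ht using hl' ⟨t, ht⟩ (mem_univ _)

lemma continuousOn_k (H : IsCumulant D K k) (hf : ContinuousOn f (Icc 0 1)) {l : ℝ}
    (hl : l ∈ goodSet D f) : ContinuousOn (fun t => k (l * f t)) (Icc 0 1) :=
  H.contk.comp (continuousOn_const.mul hf) hl

lemma continuousOn_K (H : IsCumulant D K k) (hf : ContinuousOn f (Icc 0 1)) {l : ℝ}
    (hl : l ∈ goodSet D f) : ContinuousOn (fun t => K (l * f t)) (Icc 0 1) :=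
  H.contK.comp (continuousOn_const.mul hf) hl

lemma continuousOn_cost (H : IsCumulant D K k) (hf : ContinuousOn f (Icc 0 1)) {l : ℝ}
    (hl : l ∈ goodSet D f) :
    ContinuousOn (fun t => l * f t * k (l * f t) - K (l * f t)) (Icc 0 1) :=
  ((continuousOn_const.mul hf).mul (continuousOn_k H hf hl)).sub (continuousOn_K H hf hl)

lemma integral_cost (H : IsCumulant D K k) (hf : ContinuousOn f (Icc 0 1)) {l : ℝ}
    (hl : l ∈ goodSet D f) :
    ∫ t in Icc (0:ℝ) 1, (l * f t * k (l * f t) - K (l * f t))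
      = l * slopeS k f l - energyE K f l := by
  have a1 : IntegrableOn (fun t => l * f t * k (l * f t)) (Icc 0 1) :=
    ((continuousOn_const.mul hf).mul (continuousOn_k H hf hl)).integrableOn_compact isCompact_Icc
  have a2 : IntegrableOn (fun t => K (l * f t)) (Icc 0 1) :=
    (continuousOn_K H hf hl).integrableOn_compact isCompact_Icc
  unfold slopeS energyE
  rw [integral_sub a1 a2, ← integral_const_mul]
  congr 2
  ext t
  ring

lemma lintegral_cost (H : IsCumulant D K k) (hf : ContinuousOn f (Icc 0 1)) {l : ℝ}
    (hl : l ∈ goodSet D f) :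
    ∫⁻ t in Icc (0:ℝ) 1, ENNReal.ofReal (l * f t * k (l * f t) - K (l * f t))
      = ENNReal.ofReal (l * slopeS k f l - energyE K f l) := by
  rw [← integral_cost H hf hl, ofReal_integral_eq_lintegral_ofReal
    ((continuousOn_cost H hf hl).integrableOn_compact isCompact_Icc)]
  filter_upwards [ae_restrict_mem measurableSet_Icc] with t ht
  exact H.cost_nonneg (hl t ht)

lemma cost_integral_nonneg (H : IsCumulant D K k) (hf : ContinuousOn f (Icc 0 1)) {l : ℝ}
    (hl : l ∈ goodSet D f) : 0 ≤ l * slopeS k f l - energyE K f l := by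
  rw [← integral_cost H hf hl]
  exact setIntegral_nonneg measurableSet_Icc fun t ht => H.cost_nonneg (hl t ht)

lemma slopeS_mono (H : IsCumulant D K k) (hf : ContinuousOn f (Icc 0 1)) {l l' : ℝ}
    (hl : l ∈ goodSet D f) (hl' : l' ∈ goodSet D f) (hll : l ≤ l') :
    slopeS k f l ≤ slopeS k f l' := by
  refine setIntegral_mono_on (((continuousOn_k H hf hl).mul hf).integrableOn_compact isCompact_Icc)
    (((continuousOn_k H hf hl').mul hf).integrableOn_compact isCompact_Icc) measurableSet_Icc ?_
  intro t ht
  have := H.k_mono_mul hll (hl t ht) (hl' t ht)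
  linarith

lemma continuousOn_slopeS (H : IsCumulant D K k) (hf : ContinuousOn f (Icc 0 1)) :
    ContinuousOn (slopeS k f) (goodSet D f) := by
  have := (isOpen_goodSet (D := D) hf).locallyCompactSpace
  rw [continuousOn_iff_continuous_domRestrict]
  -- The extension of `f` by constants makes the integrand jointly continuous for all times.
  set F : ℝ → ℝ := IccExtend (zero_le_one' ℝ) ((Icc (0:ℝ) 1).domRestrict f) with hF
  have hFc : Continuous F := hf.domRestrict.Icc_extend'
  have hFf : ∀ t ∈ Icc (0:ℝ) 1, F t = f t := fun t ht => IccExtend_of_mem _ _ ht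
  have hFg : ∀ (l : goodSet D f) (t : ℝ), (l : ℝ) * F t ∈ interior D :=
    fun l t => l.2 _ (projIcc (0:ℝ) 1 zero_le_one t).2
  have hc : Continuous (Function.uncurry fun (l : goodSet D f) (t : ℝ) =>
      k ((l : ℝ) * F t) * F t) := by
    have h1 : Continuous fun z : goodSet D f × ℝ => (z.1 : ℝ) * F z.2 :=
      (continuous_subtype_val.comp continuous_fst).mul (hFc.comp continuous_snd)
    exact (H.contk.comp_continuous h1 fun z => hFg z.1 z.2).mul (hFc.comp continuous_snd)
  have := continuous_parametric_integral_of_continuous (μ := volume) hc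
    (isCompact_Icc (a := (0:ℝ)) (b := 1))
  convert this using 2 with l
  refine setIntegral_congr_fun measurableSet_Icc fun t ht => ?_
  simp only [hFf t ht]

/-- Limits of the optimal densities `K'(λ_n f)` along a nondecreasing sequence `λ_n ≥ 0` whose
costs stay bounded. The costs increase pointwise, so monotone convergence controls the limit cost;
as `I` grows at least linearly, it also provides a dominating function for the densities. -/
lemma limit_density (H : IsCumulant D K k) (hf : ContinuousOn f (Icc 0 1)) {L : ℕ → ℝ}
    (hL : ∀ n, L n ∈ goodSet D f) (hL0 : ∀ n, 0 ≤ L n) (hmono : Monotone L) {C : ℕ → ℝ} {C' : ℝ}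
    (hC : ∀ n, L n * slopeS k f (L n) - energyE K f (L n) ≤ C n)
    (hC' : Tendsto C atTop (𝓝 C')) :
    ∃ (g : ℝ → ℝ) (G : ℝ → ℝ≥0∞), IntegrableOn g (Icc 0 1) ∧
      (∀ u ∈ D, ∀ᵐ t ∂(volume.restrict (Icc (0:ℝ) 1)), ENNReal.ofReal (u * g t - K u) ≤ G t) ∧
      ∫⁻ t in Icc (0:ℝ) 1, G t ≤ ENNReal.ofReal C' ∧
      Tendsto (fun n => slopeS k f (L n)) atTop (𝓝 (∫ t in Icc (0:ℝ) 1, g t * f t)) := by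
  set V := volume.restrict (Icc (0:ℝ) 1) with hV
  set c : ℕ → ℝ → ℝ := fun n t => L n * f t * k (L n * f t) - K (L n * f t) with hc
  set G : ℝ → ℝ≥0∞ := fun t => ⨆ n, ENNReal.ofReal (c n t) with hG
  have hmem : ∀ᵐ t ∂V, t ∈ Icc (0:ℝ) 1 := ae_restrict_mem measurableSet_Icc
  have hcm : ∀ n, AEMeasurable (fun t => ENNReal.ofReal (c n t)) V := fun n =>
    ((continuousOn_cost H hf (hL n)).aestronglyMeasurable
      measurableSet_Icc).aemeasurable.ennreal_ofReal
  have hGm : AEMeasurable G V := AEMeasurable.iSup hcm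
  have hcmono : ∀ᵐ t ∂V, Monotone fun n => ENNReal.ofReal (c n t) := by
    filter_upwards [hmem] with t ht n m hnm
    exact ENNReal.ofReal_le_ofReal
      (H.cost_mono (hL0 n) (hmono hnm) (hL n t ht) (hL m t ht))
  have hGint : ∫⁻ t, G t ∂V ≤ ENNReal.ofReal C' := by
    rw [hG, lintegral_iSup' hcm hcmono]
    have hm : Monotone fun n => ∫⁻ t, ENNReal.ofReal (c n t) ∂V := by
      intro n m hnm
      refine lintegral_mono_ae ?_
      filter_upwards [hcmono] with t ht using ht hnm
    refine le_of_tendsto_of_tendsto' (tendsto_atTop_iSup hm) (ENNReal.tendsto_ofReal hC')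
      fun n => ?_
    rw [hV, hc, lintegral_cost H hf (hL n)]
    exact ENNReal.ofReal_le_ofReal (hC n)
  have hGtop : ∫⁻ t, G t ∂V ≠ ⊤ := ne_top_of_le_ne_top ENNReal.ofReal_ne_top hGint
  have hGfin : ∀ᵐ t ∂V, G t < ⊤ := ae_lt_top' hGm hGtop
  obtain ⟨ε, hε, hball⟩ := Metric.nhds_basis_closedBall.mem_iff.1
    (mem_interior_iff_mem_nhds.1 H.zero_mem)
  have hεD : ε ∈ D := hball (by simp [abs_of_pos hε])
  have hεD' : -ε ∈ D := hball (by simp [abs_of_pos hε])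
  set A : ℝ := max |K ε| |K (-ε)| with hA
  set B : ℝ → ℝ := fun t => ((G t).toReal + A) / ε with hB
  have hBint : Integrable B V :=
    ((integrable_toReal_of_lintegral_ne_top hGm hGtop).add (integrable_const A)).div_const ε
  have hcG : ∀ t, G t < ⊤ → ∀ n, c n t ≤ (G t).toReal := by
    intro t ht n
    exact (ENNReal.ofReal_le_iff_le_toReal ht.ne).1 (le_iSup (fun n => ENNReal.ofReal (c n t)) n)
  have hkB : ∀ t ∈ Icc (0:ℝ) 1, G t < ⊤ → ∀ n, |k (L n * f t)| ≤ B t := by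
    intro t ht htG n
    have h1 := H.fenchel (hL n t ht) hεD
    have h2 := H.fenchel (hL n t ht) hεD'
    have h3 := hcG t htG n
    have h4 := (le_abs_self (K ε)).trans (le_max_left _ |K (-ε)|)
    have h5 := (le_abs_self (K (-ε))).trans (le_max_right |K ε| _)
    rw [hB, le_div_iff₀ hε, ← abs_of_pos hε, ← abs_mul, abs_le]
    constructor <;> simp only [hc] at h3 <;> linarith
  have hlim : ∀ t ∈ Icc (0:ℝ) 1, G t < ⊤ →
      ∃ y, Tendsto (fun n => k (L n * f t)) atTop (𝓝 y) := by
    intro t ht htG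
    have hbd := hkB t ht htG
    rcases lt_trichotomy (f t) 0 with h | h | h
    · have ha : Antitone fun n => k (L n * f t) := by
        intro n m hnm
        have := H.k_mono_mul (hmono hnm) (hL n t ht) (hL m t ht)
        have := nonpos_of_mul_nonneg_left this h
        simpa using this
      exact ⟨_, tendsto_atTop_ciInf ha ⟨-B t, by
        rintro _ ⟨n, rfl⟩; exact (abs_le.1 (hbd n)).1⟩⟩
    · exact ⟨k 0, by simp [h]⟩
    · have ha : Monotone fun n => k (L n * f t) := by
        intro n m hnm
        have := H.k_mono_mul (hmono hnm) (hL n t ht) (hL m t ht)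
        have := nonneg_of_mul_nonneg_left this h
        simpa using this
      exact ⟨_, tendsto_atTop_ciSup ha ⟨B t, by
        rintro _ ⟨n, rfl⟩; exact (abs_le.1 (hbd n)).2⟩⟩
  set g : ℝ → ℝ := fun t => limUnder atTop fun n => k (L n * f t) with hg
  have hgt : ∀ᵐ t ∂V, Tendsto (fun n => k (L n * f t)) atTop (𝓝 (g t)) := by
    filter_upwards [hmem, hGfin] with t ht htG using tendsto_nhds_limUnder (hlim t ht htG)
  have hkm : ∀ n, AEStronglyMeasurable (fun t => k (L n * f t)) V := fun n =>
    (continuousOn_k H hf (hL n)).aestronglyMeasurable measurableSet_Icc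
  have hfm : AEStronglyMeasurable f V := hf.aestronglyMeasurable measurableSet_Icc
  have hgm : AEStronglyMeasurable g V := aestronglyMeasurable_of_tendsto_ae atTop hkm hgt
  refine ⟨g, G, ?_, ?_, hGint, ?_⟩
  · refine Integrable.mono' hBint hgm ?_
    filter_upwards [hmem, hGfin, hgt] with t ht htG hgt'
    exact le_of_tendsto hgt'.norm (Eventually.of_forall fun n => hkB t ht htG n)
  · intro u hu
    filter_upwards [hmem, hgt] with t ht hgt'
    have T : Tendsto (fun n => ENNReal.ofReal (u * k (L n * f t) - K u)) atTop
        (𝓝 (ENNReal.ofReal (u * g t - K u))) :=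
      ENNReal.tendsto_ofReal ((hgt'.const_mul u).sub_const _)
    refine le_of_tendsto T (Eventually.of_forall fun n => ?_)
    exact (ENNReal.ofReal_le_ofReal (H.fenchel (hL n t ht) hu)).trans
      (le_iSup (fun n => ENNReal.ofReal (c n t)) n)
  · obtain ⟨R, hR⟩ := isCompact_Icc.exists_bound_of_continuousOn hf
    refine tendsto_integral_of_dominated_convergence (fun t => B t * R)
      (fun n => (hkm n).mul hfm) (hBint.mul_const R) ?_ ?_
    · intro n
      filter_upwards [hmem, hGfin] with t ht htG
      rw [norm_mul]
      have hb := hkB t ht htG n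
      exact mul_le_mul hb (hR t ht) (norm_nonneg _) ((abs_nonneg _).trans hb)
    · filter_upwards [hgt] with t ht using ht.mul_const _

end Good

/-! ### Existence of a minimizer -/

section Existence

variable {D : Set ℝ} {K k f : ℝ → ℝ} {x M : ℝ}

/-- If the slopes `S(λ)` all stay below `x`, take `λ` up to the right end of `goodSet`. When this
end `λ₀` is finite, the missing mass `x - lim S(λ)` is supplied by an atom of `μ_h` at a time where
`λ₀ f` reaches the boundary of `D`. -/
lemma exists_of_slopeS_lt (H : IsCumulant D K k) (hf : ContinuousOn f (Icc 0 1))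
    (hS : ∀ l ∈ goodSet D f, slopeS k f l < x)
    (hM : ∀ l ∈ goodSet D f, l * x - energyE K f l ≤ M) :
    ∃ h ∈ BVset ℝ, StieltjesIntegralEq f h x ∧
      ID (fun v => ⨆ u ∈ D, ENNReal.ofReal (u * v - K u)) h ≤ ENNReal.ofReal M := by
  have h0 : (0:ℝ) ∈ goodSet D f := zero_mem_goodSet H
  have hIcc : ∀ l ∈ goodSet D f, ∀ r, 0 ≤ r → r ≤ l → r ∈ goodSet D f := fun l hl r hr hrl =>
    (convex_goodSet H).ordConnected.out h0 hl ⟨hr, hrl⟩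
  have hcost : ∀ l ∈ goodSet D f, l * slopeS k f l - energyE K f l ≤ M - l * (x - slopeS k f l) :=
    fun l hl => by
      have := hM l hl
      linarith
  by_cases hb : BddAbove (goodSet D f)
  · set l₀ := sSup (goodSet D f) with hl₀
    have hnot : l₀ ∉ goodSet D f := fun hmem => by
      obtain ⟨ε, hε, hball⟩ := Metric.nhds_basis_closedBall.mem_iff.1
        ((isOpen_goodSet hf).mem_nhds hmem)
      have : l₀ + ε ∈ goodSet D f := hball (by simp [abs_of_pos hε])
      linarith [le_csSup hb this]
    have hpos : 0 < l₀ := lt_of_le_of_ne (le_csSup hb h0) fun h => hnot (h ▸ h0)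
    obtain ⟨L, hLm, hLI, hLt⟩ := exists_seq_strictMono_tendsto' hpos
    have hL : ∀ n, L n ∈ goodSet D f := fun n => by
      obtain ⟨l, hl, hlt⟩ := exists_lt_of_lt_csSup ⟨0, h0⟩ (hLI n).2
      exact hIcc l hl _ (hLI n).1.le hlt.le
    have hSm : Monotone fun n => slopeS k f (L n) := fun n m hnm =>
      slopeS_mono H hf (hL n) (hL m) (hLm.monotone hnm)
    have hSb : BddAbove (range fun n => slopeS k f (L n)) :=
      ⟨x, by rintro _ ⟨n, rfl⟩; exact (hS _ (hL n)).le⟩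
    obtain ⟨σ, hσ⟩ : ∃ σ, Tendsto (fun n => slopeS k f (L n)) atTop (𝓝 σ) :=
      ⟨_, tendsto_atTop_ciSup hSm hSb⟩
    have hσx : σ ≤ x := le_of_tendsto' hσ fun n => (hS _ (hL n)).le
    have hCt : Tendsto (fun n => M - L n * (x - slopeS k f (L n))) atTop
        (𝓝 (M - l₀ * (x - σ))) := (hLt.mul (hσ.const_sub x)).const_sub M
    have hCn : 0 ≤ M - l₀ * (x - σ) := ge_of_tendsto' hCt fun n =>
      (cost_integral_nonneg H hf (hL n)).trans (hcost _ (hL n))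
    obtain ⟨g, G, hg, hG, hGi, hgt⟩ := limit_density H hf hL (fun n => (hLI n).1.le) hLm.monotone
      (fun n => hcost _ (hL n)) hCt
    have hgσ : ∫ t in Icc (0:ℝ) 1, g t * f t = σ := tendsto_nhds_unique hgt hσ
    obtain ⟨s, hs, hsD⟩ : ∃ s ∈ Icc (0:ℝ) 1, l₀ * f s ∉ interior D := by
      by_contra! hcon
      exact hnot hcon
    have hfs : f s ≠ 0 := fun h => hsD (by rw [h, mul_zero]; exact H.zero_mem)
    have hv : ∀ u ∈ D, u * ((x - σ) / f s) ≤ l₀ * (x - σ) := by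
      intro u hu
      have hle : u / f s ≤ l₀ := by
        by_contra! hcon
        have hup : 0 < u / f s := hpos.trans hcon
        have hu0 : u ≠ 0 := fun h => by simp [h] at hup
        refine hsD ?_
        have := H.smul_mem (θ := l₀ / (u / f s)) (subset_closure hu) (by positivity)
          ((div_lt_one hup).2 hcon)
        convert this using 1
        field_simp
      calc u * ((x - σ) / f s) = u / f s * (x - σ) := by ring
        _ ≤ _ := mul_le_mul_of_nonneg_right hle (sub_nonneg.2 hσx)
    obtain ⟨h, hBV, hint, hID⟩ := construct hf hg hs hv hG
    refine ⟨h, hBV, ?_, hID.trans ?_⟩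
    · convert hint using 1
      rw [hgσ, div_mul_cancel₀ _ hfs]
      ring
    · refine (add_le_add_left hGi _).trans_eq ?_
      rw [← ENNReal.ofReal_add hCn (mul_nonneg hpos.le (sub_nonneg.2 hσx))]
      congr 1
      ring
  · have hL : ∀ n : ℕ, (n : ℝ) ∈ goodSet D f := fun n => by
      obtain ⟨l, hl, hlt⟩ := not_bddAbove_iff.1 hb n
      exact hIcc l hl _ n.cast_nonneg hlt.le
    obtain ⟨g, G, hg, hG, hGi, hgt⟩ := limit_density H hf (L := fun n : ℕ => (n : ℝ))
      (C := fun _ => M) hL (fun n => n.cast_nonneg) Nat.mono_cast (fun n => (hcost _ (hL n)).trans (by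
        have := mul_nonneg (n.cast_nonneg (α := ℝ)) (sub_nonneg.2 (hS _ (hL n)).le)
        linarith)) tendsto_const_nhds
    have hSx : Tendsto (fun n : ℕ => slopeS k f n) atTop (𝓝 x) := by
      -- Nonnegativity of the cost forces `n (x - S(n)) ≤ M`.
      have h1 : Tendsto (fun n : ℕ => x - M / n) atTop (𝓝 x) := by
        simpa using (tendsto_const_div_atTop_nhds_zero_nat M).const_sub x
      refine tendsto_of_tendsto_of_tendsto_of_le_of_le' h1 tendsto_const_nhds ?_
        (Eventually.of_forall fun n => (hS _ (hL n)).le)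
      filter_upwards [eventually_gt_atTop 0] with n hn
      have hn' : (0:ℝ) < n := Nat.cast_pos.2 hn
      have := (cost_integral_nonneg H hf (hL n)).trans (hcost _ (hL n))
      rw [sub_le_comm, le_div_iff₀ hn']
      linarith
    obtain ⟨h, hBV, hint, hID⟩ := construct (v := 0) (c := 0) hf hg
      (left_mem_Icc.2 zero_le_one) (by simp) hG
    refine ⟨h, hBV, ?_, hID.trans (by simpa using hGi)⟩
    convert hint using 1
    rw [tendsto_nhds_unique hgt hSx]
    ring

/-- If `S(λ) = x`, the density `K'(λ f)` is admissible and has cost `λ x - E_f(λ)`. -/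
lemma exists_of_slopeS_eq (H : IsCumulant D K k) (hf : ContinuousOn f (Icc 0 1)) {l : ℝ}
    (hl : l ∈ goodSet D f) (hS : slopeS k f l = x) (hM : l * x - energyE K f l ≤ M) :
    ∃ h ∈ BVset ℝ, StieltjesIntegralEq f h x ∧
      ID (fun v => ⨆ u ∈ D, ENNReal.ofReal (u * v - K u)) h ≤ ENNReal.ofReal M := by
  obtain ⟨h, hBV, hint, hID⟩ := construct (D := D) (K := K) (v := 0) (c := 0) hf
    ((continuousOn_k H hf hl).integrableOn_compact isCompact_Icc)
    (left_mem_Icc.2 zero_le_one) (by simp)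
    (G := fun t => ENNReal.ofReal (l * f t * k (l * f t) - K (l * f t))) fun u hu => by
      filter_upwards [ae_restrict_mem measurableSet_Icc] with t ht
      exact ENNReal.ofReal_le_ofReal (H.fenchel (hl t ht) hu)
  refine ⟨h, hBV, ?_, hID.trans ?_⟩
  · convert hint using 1
    rw [← hS, zero_mul, add_zero]
    rfl
  · rw [lintegral_cost H hf hl, hS, ENNReal.ofReal_zero, add_zero]
    exact ENNReal.ofReal_le_ofReal hM

lemma neg_mem_goodSet_neg {l : ℝ} (hl : l ∈ goodSet D (-f)) : -l ∈ goodSet D f := fun t ht => by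
  simpa using hl t ht

lemma stieltjesIntegralEq_of_neg {h : ℝ → ℝ} (hx : StieltjesIntegralEq (-f) h (-x)) :
    StieltjesIntegralEq f h x := by
  obtain ⟨μp, μm, i1, i2, hp, hm, hh, hxx⟩ := hx
  refine ⟨μp, μm, i1, i2, hp, hm, hh, ?_⟩
  simp only [Pi.neg_apply, integral_neg] at hxx
  linarith

/-- The slopes `S` form an interval, hence attain `x` or stay on one side of it; the
case of slopes above `x` reduces to the other one by changing the signs of `f` and `x`. -/
lemma exists_ID_le (H : IsCumulant D K k) (hf : ContinuousOn f (Icc 0 1))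
    (hM : ∀ l ∈ goodSet D f, l * x - energyE K f l ≤ M) :
    ∃ h ∈ BVset ℝ, StieltjesIntegralEq f h x ∧
      ID (fun v => ⨆ u ∈ D, ENNReal.ofReal (u * v - K u)) h ≤ ENNReal.ofReal M := by
  by_cases hex : ∃ l ∈ goodSet D f, slopeS k f l = x
  · obtain ⟨l, hl, hS⟩ := hex
    exact exists_of_slopeS_eq H hf hl hS (hM l hl)
  have hpre : IsPreconnected (slopeS k f '' goodSet D f) :=
    (convex_goodSet H).isPreconnected.image _ (continuousOn_slopeS H hf)
  by_cases hlt : ∀ l ∈ goodSet D f, slopeS k f l < x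
  · exact exists_of_slopeS_lt H hf hlt hM
  push Not at hex hlt
  obtain ⟨l₁, hl₁, hle⟩ := hlt
  have hgt : ∀ l ∈ goodSet D f, x < slopeS k f l := by
    intro l hl
    by_contra! hcon
    obtain ⟨l', hl', he⟩ := hpre.Icc_subset (mem_image_of_mem _ hl) (mem_image_of_mem _ hl₁)
      ⟨hcon, hle⟩
    exact hex l' hl' he
  have hSn : ∀ l, slopeS k (-f) l = -slopeS k f (-l) := fun l => by
    simp [slopeS, integral_neg]
  have hEn : ∀ l, energyE K (-f) l = energyE K f (-l) := fun l => by
    simp [energyE]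
  obtain ⟨h, hBV, hint, hID⟩ := exists_of_slopeS_lt (x := -x) (M := M) H hf.neg
    (fun l hl => by
      have := hgt _ (neg_mem_goodSet_neg hl)
      rw [hSn]
      linarith)
    (fun l hl => by
      have := hM _ (neg_mem_goodSet_neg hl)
      rw [hEn]
      linarith)
  exact ⟨h, hBV, stieltjesIntegralEq_of_neg hint, hID⟩

end Existence

/-- Contraction formula for the kernel-weighted rate function in dimension one:
`I_f(x) = min { I_D(h) : h ∈ BV[0,1], ∫₀¹ f dμ_h = x }`, the minimum being attained. -/
theorem rateIf1_eq_min_ID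
    {Ω : Type*} [MeasurableSpace Ω] (P : Measure Ω) [IsProbabilityMeasure P]
    (X1 : Ω → ℝ) (hX1 : Measurable X1)
    (hCramer : (0:ℝ) ∈ interior (lapDom1 P X1))
    (f : ℝ → ℝ) (hLip : ∃ C : NNReal, LipschitzOnWith C f (Icc (0:ℝ) 1))
    (hfne : ∃ t ∈ Icc (0:ℝ) 1, f t ≠ 0) :
    ∀ x : ℝ,
      (∀ h ∈ BVset ℝ, StieltjesIntegralEq f h x → rateIf1 P X1 f x ≤ ID (rateI1 P X1) h) ∧
      ∃ h ∈ BVset ℝ, StieltjesIntegralEq f h x ∧ ID (rateI1 P X1) h = rateIf1 P X1 f x := by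
  intro x
  obtain ⟨k, H⟩ := isCumulant_cgfK1 P X1 hX1 hCramer
  obtain ⟨C, hC⟩ := hLip
  have hf : ContinuousOn f (Icc 0 1) := hC.continuousOn
  have lower : ∀ h ∈ BVset ℝ, StieltjesIntegralEq f h x →
      rateIf1 P X1 f x ≤ ID (rateI1 P X1) h := fun h _ hx =>
    iSup₂_le fun l hl => lower_bound H hf hx hl.1 hl.2
  refine ⟨lower, ?_⟩
  by_cases htop : rateIf1 P X1 f x = ⊤
  · -- Any admissible `h` will do, for instance a single jump at a time where `f ≠ 0`.
    obtain ⟨s, hs, hfs⟩ := hfne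
    obtain ⟨h, hBV, hint, -⟩ := construct (D := ∅) (K := 0) (G := 0) (g := 0) (c := 0)
      (v := x / f s) hf integrableOn_zero hs (by simp) (by simp)
    have hint' : StieltjesIntegralEq f h x := by
      convert hint using 1
      simp [div_mul_cancel₀ _ hfs]
    refine ⟨h, hBV, hint', ?_⟩
    rw [htop]
    exact top_le_iff.1 (htop ▸ lower h hBV hint')
  · obtain ⟨h, hBV, hint, hID⟩ := exists_ID_le (x := x) (M := (rateIf1 P X1 f x).toReal) H hf
      fun l hl => by
        refine (ENNReal.ofReal_le_iff_le_toReal htop).1 ?_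
        refine le_iSup₂_of_le (f := fun l (_ : l ∈ EfDom1 P X1 f) => ENNReal.ofReal
          (l * x - ∫ t in Icc (0:ℝ) 1, cgfK1 P X1 (l * f t))) l ⟨?_, ?_⟩ le_rfl
        · filter_upwards [ae_restrict_mem measurableSet_Icc] with t ht
          exact interior_subset (hl t ht)
        · exact (continuousOn_K H hf hl).integrableOn_compact isCompact_Icc
    rw [ENNReal.ofReal_toReal htop] at hID
    exact ⟨h, hBV, hint, le_antisymm hID (lower h hBV hint)⟩
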